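/- arXiv:2110.07334 — 2 statements merged into one kernel-verified Lean document; each statement's English description precedes it below -/
import Mathlib

section
/- The Goldbach partition function is unbounded: for every natural number N there exists an even integer m such that the number of unordered pairs of primes (p, q) with p ≤ q and p + q = m is strictly greater than N. Consequently lim sup_{m→∞} w(m) = ∞. -/
/-!
The proof is a pigeonhole argument. If `P` is the set of odd primes up to `n`, the `#P ^ 2` ordered
pairs in `P ×ˢ P` have even sums, all below `2 * n + 1`. Chebyshev's lower bound
`n * log 2 - log (n + 1) ≤ ψ n ≤ π n * log n`, together with `log n = o(√n)`, shows that `π n`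
eventually exceeds any multiple of `√n` (`eventually_mul_sqrt_lt_primeCounting`), so `#P ^ 2` exceeds
any multiple of `2 * n + 1`. Hence some sum is attained by more than `2 * N` ordered pairs, and
therefore by more than `N` unordered ones, since each unordered pair comes from at most two
ordered ones.
-/

open Filter in
theorem eventually_mul_sqrt_lt_primeCounting (K : ℝ) (hK : 1 ≤ K) :
    ∀ᶠ n : ℕ in atTop, K * √(n : ℝ) < Nat.primeCounting n := by
  have hlog := ((isLittleO_log_rpow_atTop (r := 1 / 2) (by norm_num)).bound
    (show 0 < 1 / (4 * K) by positivity)).filter_mono le_rfl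
  have hlog' := tendsto_natCast_atTop_atTop (R := ℝ) |>.eventually hlog
  filter_upwards [hlog', eventually_ge_atTop 100] with n hn h100
  have h100' : (100 : ℝ) ≤ n := by exact_mod_cast h100
  have hL : 0 < Real.log n := Real.log_pos (by linarith)
  rw [← Real.sqrt_eq_rpow, Real.norm_of_nonneg hL.le, Real.norm_of_nonneg (Real.sqrt_nonneg _)] at hn
  have hs : √(n : ℝ) * √(n : ℝ) = n := Real.mul_self_sqrt (by positivity)
  have hs10 : 10 ≤ √(n : ℝ) := Real.le_sqrt_of_sq_le (by linarith)
  have hlog1 : Real.log (n + 1) ≤ Real.log 2 + Real.log n := by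
    rw [← Real.log_mul (by norm_num) (by positivity)]
    exact Real.log_le_log (by positivity) (by linarith)
  have hψ := (Chebyshev.psi_ge n).trans (Chebyshev.psi_le_primeCounting_mul_log n)
  have hl2 := Real.log_two_gt_d9
  have hl2' := Real.log_two_lt_d9
  have hKL : K * Real.log n ≤ √(n : ℝ) / 4 := by
    calc K * Real.log n ≤ K * (1 / (4 * K) * √(n : ℝ)) := by gcongr
      _ = √(n : ℝ) / 4 := by field_simp
  have hLs : Real.log n ≤ √(n : ℝ) / 4 := by nlinarith
  by_contra! hle
  have h1 : (Nat.primeCounting n : ℝ) * Real.log n ≤ n / 4 := by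
    calc (Nat.primeCounting n : ℝ) * Real.log n ≤ K * √(n : ℝ) * Real.log n := by gcongr
      _ = K * Real.log n * √(n : ℝ) := by ring
      _ ≤ √(n : ℝ) / 4 * √(n : ℝ) := by gcongr
      _ = n / 4 := by linear_combination hs / 4
  nlinarith

theorem exists_mul_lt_card_oddPrimes_sq (M : ℕ) :
    ∃ n : ℕ, (2 * n + 1) * M <
      ((Nat.primesLE n).erase 2).card * ((Nat.primesLE n).erase 2).card := by
  obtain ⟨n, hn, h1⟩ := ((eventually_mul_sqrt_lt_primeCounting (M + 4)
    (by linarith [M.cast_nonneg (α := ℝ)])).and (Filter.eventually_ge_atTop 1)).exists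
  refine ⟨n, ?_⟩
  have hcard : Nat.primeCounting n ≤ ((Nat.primesLE n).erase 2).card + 1 := by
    rw [← Nat.primesLE_card_eq_primeCounting]
    have := Finset.pred_card_le_card_erase (s := Nat.primesLE n) (a := 2)
    omega
  generalize ((Nat.primesLE n).erase 2).card = k at *
  have hcard' : (Nat.primeCounting n : ℝ) ≤ k + 1 := by exact_mod_cast hcard
  have h1' : (1 : ℝ) ≤ n := by exact_mod_cast h1
  have hs : √(n : ℝ) * √(n : ℝ) = n := Real.mul_self_sqrt (by positivity)
  have hs1 : 1 ≤ √(n : ℝ) := Real.le_sqrt_of_sq_le (by linarith)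
  have hM : (0 : ℝ) ≤ M := M.cast_nonneg
  have hk : ((M : ℝ) + 3) * √(n : ℝ) < k := by linarith
  have hk2 := mul_self_lt_mul_self (by positivity) hk
  have : ((2 * n + 1) * M : ℝ) < k * k := by
    calc ((2 * n + 1) * M : ℝ) ≤ 3 * n * M := by gcongr; linarith
      _ ≤ (M + 3) * (M + 3) * (√(n : ℝ) * √(n : ℝ)) := by
        rw [hs]; nlinarith [mul_nonneg hM hM, mul_nonneg hM (by linarith : (0 : ℝ) ≤ n),
          mul_nonneg (mul_nonneg hM hM) (by linarith : (0 : ℝ) ≤ n)]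
      _ = (M + 3) * √(n : ℝ) * ((M + 3) * √(n : ℝ)) := by ring
      _ < k * k := hk2
  exact_mod_cast this

/-- The Goldbach partition function is unbounded: for every `N` there
is an even integer `m` with more than `N` unordered Goldbach representations. -/
theorem goldbach_partition_function_unbounded :
    ∀ N : ℕ, ∃ m : ℕ, Even m ∧
      N < {pq : ℕ × ℕ | pq.1 ≤ pq.2 ∧ Nat.Prime pq.1 ∧ Nat.Prime pq.2 ∧
        pq.1 + pq.2 = m}.ncard := by
  intro N
  obtain ⟨n, hn⟩ := exists_mul_lt_card_oddPrimes_sq (2 * N)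
  set P := (Nat.primesLE n).erase 2 with hP
  have hmem : ∀ p ∈ P, p.Prime ∧ p ≤ n ∧ Odd p := by
    intro p hp
    obtain ⟨hp2, hp⟩ := Finset.mem_erase.mp hp
    have hpp := Nat.prime_of_mem_primesLE hp
    exact ⟨hpp, Nat.le_of_mem_primesLE hp, hpp.odd_of_ne_two hp2⟩
  obtain ⟨m, -, hm⟩ := Finset.exists_lt_card_fiber_of_mul_lt_card_of_maps_to
    (s := P ×ˢ P) (t := Finset.range (2 * n + 1)) (f := fun x => x.1 + x.2) (n := 2 * N)
    (by
      intro x hx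
      obtain ⟨h1, h2⟩ := Finset.mem_product.mp hx
      have := (hmem _ h1).2.1
      have := (hmem _ h2).2.1
      simp only [Finset.mem_range]
      omega)
    (by rwa [Finset.card_range, Finset.card_product])
  set A := (P ×ˢ P).filter (fun x => x.1 + x.2 = m) with hA
  have hAmem : ∀ x ∈ A, x.1 ∈ P ∧ x.2 ∈ P ∧ x.1 + x.2 = m := by
    intro x hx
    simpa [hA, and_assoc] using hx
  refine ⟨m, ?_, ?_⟩
  · obtain ⟨x, hx⟩ := Finset.card_pos.mp (by omega : 0 < A.card)
    obtain ⟨h1, h2, rfl⟩ := hAmem x hx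
    exact (hmem _ h1).2.2.add_odd (hmem _ h2).2.2
  · set B := A.filter (fun x => x.1 ≤ x.2) with hB
    -- Pairs with `x.1 > x.2` inject into `B` by swapping the coordinates.
    have hswap : (A.filter (fun x => ¬ x.1 ≤ x.2)).card ≤ B.card := by
      refine Finset.card_le_card_of_injOn Prod.swap ?_ Prod.swap_injective.injOn
      intro x hx
      obtain ⟨hxA, hlt⟩ := Finset.mem_filter.mp hx
      obtain ⟨h1, h2, h3⟩ := hAmem x hxA
      simp only [hB, hA, Finset.coe_filter, Finset.mem_filter, Finset.mem_product, Set.mem_ofPred_eq,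
        Prod.fst_swap, Prod.snd_swap]
      exact ⟨⟨⟨h2, h1⟩, by omega⟩, by omega⟩
    have hsum := Finset.card_filter_add_card_filter_not (s := A) (fun x => x.1 ≤ x.2)
    rw [← hB] at hsum
    have hBN : N < B.card := by omega
    refine hBN.trans_le ?_
    rw [← Set.ncard_coe_finset]
    refine Set.ncard_le_ncard ?_ ?_
    · intro x hx
      obtain ⟨hxA, hle⟩ := Finset.mem_filter.mp hx
      obtain ⟨h1, h2, h3⟩ := hAmem x hxA
      exact ⟨hle, (hmem _ h1).1, (hmem _ h2).1, h3⟩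
    · refine ((Finset.range (m + 1)) ×ˢ (Finset.range (m + 1))).finite_toSet.subset ?_
      rintro x ⟨-, -, -, h⟩
      simp only [Finset.coe_product, Finset.coe_range, Set.mem_prod, Set.mem_Iio]
      omega
end

section
/- Assume that for every k ≥ 3 the primes contain an arithmetic progression of length k; that is, for every k ≥ 3 there exist a and d > 0 such that a + i·d is prime for all i < k. Then for every natural number N there exists an even integer m whose number of unordered Goldbach representations exceeds N; that is, the set of pairs (p, q) with p ≤ q, p and q prime, and p + q = m has cardinality greater than N. -/
/-!
Pair the terms of a prime arithmetic progression symmetrically about its midpoint. If `a + i * d` is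
prime for all `i < 2 * N + 3`, then the `i`-th term and the `(2 * N + 2 - i)`-th term always sum to
`m = 2 * (a + (N + 1) * d)`, and the indices `i ≤ N` give `N + 1` different pairs because `d > 0`.
The odd length is chosen so that `m` is twice the middle term, hence even.
-/


/-- Assuming the Green–Tao theorem (the primes contain arithmetic
progressions of every length `k ≥ 3`), for every `N` there exists an even integer
`m` with more than `N` unordered Goldbach representations. -/
theorem goldbach_partition_unbounded_of_green_tao
    (greenTao : ∀ k : ℕ, 3 ≤ k → ∃ a d : ℕ, 0 < d ∧ ∀ i < k, Nat.Prime (a + i * d)) :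
    ∀ N : ℕ, ∃ m : ℕ, Even m ∧
      N < {pq : ℕ × ℕ | pq.1 ≤ pq.2 ∧ Nat.Prime pq.1 ∧ Nat.Prime pq.2 ∧
        pq.1 + pq.2 = m}.ncard := by
  intro N
  obtain ⟨a, d, hd, hprime⟩ := greenTao (2 * N + 3) (by omega)
  refine ⟨2 * (a + (N + 1) * d), even_two_mul _, ?_⟩
  set S : Set (ℕ × ℕ) := {pq | pq.1 ≤ pq.2 ∧ Nat.Prime pq.1 ∧ Nat.Prime pq.2 ∧
    pq.1 + pq.2 = 2 * (a + (N + 1) * d)} with hS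
  -- Finiteness is needed since `ncard` of an infinite set is `0`.
  have hfin : S.Finite := by
    refine (Set.finite_Iic (2 * (a + (N + 1) * d), 2 * (a + (N + 1) * d))).subset ?_
    rintro ⟨p, q⟩ ⟨-, -, -, h⟩
    simp only at h
    exact Prod.mk_le_mk.2 ⟨by omega, by omega⟩
  let f : ℕ → ℕ × ℕ := fun i => (a + i * d, a + (2 * N + 2 - i) * d)
  have hinj : Function.Injective f := fun i j hij =>
    Nat.eq_of_mul_eq_mul_right hd (Nat.add_left_cancel (congrArg Prod.fst hij))
  have hsub : (((Finset.range (N + 1)).image f : Finset (ℕ × ℕ)) : Set (ℕ × ℕ)) ⊆ S := by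
    intro x hx
    obtain ⟨i, hi, rfl⟩ := Finset.mem_image.1 (Finset.mem_coe.1 hx)
    have hi' : i < N + 1 := Finset.mem_range.1 hi
    refine ⟨?_, hprime _ (by omega), hprime _ (by omega), ?_⟩
    · exact Nat.add_le_add_left (Nat.mul_le_mul_right d (by omega)) a
    · have h : i + (2 * N + 2 - i) = 2 * (N + 1) := by omega
      calc a + i * d + (a + (2 * N + 2 - i) * d)
          = 2 * a + (i + (2 * N + 2 - i)) * d := by ring
        _ = 2 * (a + (N + 1) * d) := by rw [h]; ring
  have hcard := Set.ncard_le_ncard hsub hfin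
  rw [Set.ncard_coe_finset, Finset.card_image_of_injective _ hinj, Finset.card_range] at hcard
  exact hcard
end
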